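/- arXiv:0711.1478 — 3 statements merged into one kernel-verified Lean document; each statement's English description precedes it below -/
import Mathlib

section
/- Fix a real number α with 0 < α < 1/2 and define, for integers i ≥ 1, n_i = ⌈(1 + i^{−α})^i⌉. Then: (a) the ratio n_i/n_{i+1} converges to 1 as i → ∞; and (b) the series ∑_{i≥2} 1/(ln n_i)² converges. -/
/-!
Write `x i = i ^ (-α)` and `a i = (1 + x i) ^ i`. Since `x` decreases,
`a (i + 1) ≤ (1 + x (i + 1)) * a i`; since `i * x i` increases, Bernoulli's inequality shows that
`a` increases, just as it does for `(1 + t / i) ^ i`. Hence `a i / a (i + 1)` is squeezed between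
`(1 + x (i + 1))⁻¹` and `1`, and rounding up is harmless because `a → ∞`. For the series,
`log (a i) = i * log (1 + x i) ≥ i ^ (1 - α) / 2`, so its terms are at most
`4 / i ^ (2 * (1 - α))`, where `2 * (1 - α) > 1`.
-/

open Filter Topology

theorem one_add_pow_le_one_add_pow_succ {x y : ℝ} {i : ℕ} (hx : -1 ≤ x)
    (hxy : i * x ≤ (i + 1) * y) : (1 + x) ^ i ≤ (1 + y) ^ (i + 1) := by
  have hi : (0 : ℝ) < i + 1 := by positivity
  set p : ℝ := i / (i + 1) with hp
  have bernoulli : (1 + x) ^ p ≤ 1 + p * x :=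
    rpow_one_add_le_one_add_mul_self hx (by positivity) ((div_le_one hi).2 (by linarith))
  have hpx : p * x ≤ y := by
    rwa [hp, div_mul_eq_mul_div, div_le_iff₀' hi]
  have h1x : 0 ≤ 1 + x := by linarith
  calc (1 + x) ^ i = ((1 + x) ^ p) ^ (i + 1) := by
        rw [← Real.rpow_mul_natCast h1x, Nat.cast_add_one, hp, div_mul_cancel₀ _ hi.ne',
          Real.rpow_natCast]
    _ ≤ (1 + y) ^ (i + 1) := by gcongr; linarith

theorem tendsto_one_add_pow_div_one_add_pow_succ {x : ℕ → ℝ} (hlim : Tendsto x atTop (𝓝 0))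
    (hanti : ∀ᶠ i in atTop, x (i + 1) ≤ x i)
    (hmono : ∀ᶠ i : ℕ in atTop, i * x i ≤ (i + 1) * x (i + 1)) :
    Tendsto (fun i ↦ (1 + x i) ^ i / (1 + x (i + 1)) ^ (i + 1)) atTop (𝓝 1) := by
  have hlim_succ : Tendsto (fun i ↦ x (i + 1)) atTop (𝓝 0) := hlim.comp (tendsto_add_atTop_nat 1)
  have hlower : Tendsto (fun i ↦ (1 + x (i + 1))⁻¹) atTop (𝓝 1) := by
    simpa using (hlim_succ.const_add 1).inv₀ (by norm_num)
  refine tendsto_of_tendsto_of_tendsto_of_le_of_le' hlower tendsto_const_nhds ?_ ?_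
  · filter_upwards [hanti, hlim_succ.eventually_const_lt neg_one_lt_zero] with i hle hgt
    have hpos : 0 < 1 + x (i + 1) := by linarith
    rw [le_div_iff₀ (pow_pos hpos _), pow_succ', inv_mul_cancel_left₀ hpos.ne']
    gcongr
  · filter_upwards [hmono, hlim.eventually_const_lt neg_one_lt_zero,
      hlim_succ.eventually_const_lt neg_one_lt_zero] with i hle hgt hgt_succ
    exact div_le_one_of_le₀ (one_add_pow_le_one_add_pow_succ hgt.le hle)
      (pow_nonneg (by linarith) _)

theorem tendsto_natCeil_div_natCeil {ι : Type*} {l : Filter ι} {f g : ι → ℝ} {c : ℝ}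
    (hf : Tendsto f l atTop) (hg : Tendsto g l atTop)
    (hfg : Tendsto (fun i ↦ f i / g i) l (𝓝 c)) :
    Tendsto (fun i ↦ (⌈f i⌉₊ : ℝ) / ⌈g i⌉₊) l (𝓝 c) := by
  have hf_ceil : Tendsto (fun i ↦ (⌈f i⌉₊ : ℝ) / f i) l (𝓝 1) :=
    tendsto_nat_ceil_div_atTop.comp hf
  have hg_ceil : Tendsto (fun i ↦ (⌈g i⌉₊ : ℝ) / g i) l (𝓝 1) :=
    tendsto_nat_ceil_div_atTop.comp hg
  have hprod := (hf_ceil.mul hfg).div hg_ceil one_ne_zero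
  rw [one_mul, div_one] at hprod
  refine hprod.congr' ?_
  filter_upwards [hf.eventually_gt_atTop 0, hg.eventually_gt_atTop 0] with i hfi hgi
  simp only [Pi.div_apply]
  field_simp

theorem half_le_log_one_add {x : ℝ} (hx₀ : 0 ≤ x) (hx₂ : x ≤ 2) : x / 2 ≤ Real.log (1 + x) :=
  calc x / 2 ≤ 2 * x / (x + 2) := by
        rw [div_le_div_iff₀ two_pos (by linarith)]
        nlinarith
    _ ≤ Real.log (1 + x) := Real.le_log_one_add_of_nonneg hx₀

theorem mul_rpow_neg_eq_rpow_one_sub {x α : ℝ} (hx : 0 ≤ x) (hα : α ≠ 1) :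
    x * x ^ (-α) = x ^ (1 - α) := by
  rw [sub_eq_add_neg, Real.rpow_one_add' hx (by grind)]

section RpowNeg

variable {α : ℝ}

theorem tendsto_one_add_rpow_neg_pow_atTop (hα : α < 1) :
    Tendsto (fun i : ℕ ↦ (1 + (i : ℝ) ^ (-α)) ^ i) atTop atTop := by
  have hrpow : Tendsto (fun i : ℕ ↦ (i : ℝ) ^ (1 - α)) atTop atTop :=
    (tendsto_rpow_atTop (by linarith)).comp tendsto_natCast_atTop_atTop
  refine tendsto_atTop_mono (fun i ↦ ?_) hrpow
  have hx : 0 ≤ (i : ℝ) ^ (-α) := by positivity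
  calc (i : ℝ) ^ (1 - α) = i * (i : ℝ) ^ (-α) :=
        (mul_rpow_neg_eq_rpow_one_sub i.cast_nonneg hα.ne).symm
    _ ≤ 1 + i * (i : ℝ) ^ (-α) := by linarith
    _ ≤ (1 + (i : ℝ) ^ (-α)) ^ i := one_add_mul_le_pow (by linarith) i

theorem tendsto_natCeil_one_add_rpow_neg_pow_div_succ (hα₀ : 0 < α) (hα₁ : α < 1) :
    Tendsto (fun i : ℕ ↦ (⌈(1 + (i : ℝ) ^ (-α)) ^ i⌉₊ : ℝ) /
      ⌈(1 + ((i + 1 : ℕ) : ℝ) ^ (-α)) ^ (i + 1)⌉₊) atTop (𝓝 1) := by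
  have hatTop := tendsto_one_add_rpow_neg_pow_atTop hα₁
  refine tendsto_natCeil_div_natCeil hatTop (hatTop.comp (tendsto_add_atTop_nat 1))
    (tendsto_one_add_pow_div_one_add_pow_succ (x := fun i ↦ (i : ℝ) ^ (-α))
      ((tendsto_rpow_neg_atTop hα₀).comp tendsto_natCast_atTop_atTop) ?_ (.of_forall fun i ↦ ?_))
  · filter_upwards [eventually_gt_atTop 0] with i hi
    exact Real.rpow_le_rpow_of_nonpos (Nat.cast_pos.2 hi) (by simp) (by linarith)
  · rw [← Nat.cast_add_one, mul_rpow_neg_eq_rpow_one_sub (Nat.cast_nonneg _) hα₁.ne,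
      mul_rpow_neg_eq_rpow_one_sub (Nat.cast_nonneg _) hα₁.ne]
    exact Real.rpow_le_rpow i.cast_nonneg (by simp) (by linarith)

theorem half_rpow_le_log_natCeil_one_add_rpow_neg_pow (hα₀ : 0 ≤ α) {i : ℕ} (hi : 1 ≤ i) :
    (i : ℝ) ^ (1 - α) / 2 ≤ Real.log ⌈(1 + (i : ℝ) ^ (-α)) ^ i⌉₊ := by
  have hi' : (1 : ℝ) ≤ i := Nat.one_le_cast.2 hi
  have hx₁ : (i : ℝ) ^ (-α) ≤ 1 := Real.rpow_le_one_of_one_le_of_nonpos hi' (by linarith)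
  calc (i : ℝ) ^ (1 - α) / 2 = i * ((i : ℝ) ^ (-α) / 2) := by
        rw [sub_eq_add_neg, Real.rpow_add (by positivity), Real.rpow_one, mul_div_assoc]
    _ ≤ i * Real.log (1 + (i : ℝ) ^ (-α)) := by
        gcongr
        exact half_le_log_one_add (by positivity) (by linarith)
    _ = Real.log ((1 + (i : ℝ) ^ (-α)) ^ i) := (Real.log_pow _ _).symm
    _ ≤ Real.log ⌈(1 + (i : ℝ) ^ (-α)) ^ i⌉₊ := by
        gcongr
        exact Nat.le_ceil _

theorem summable_one_div_sq_log_natCeil_one_add_rpow_neg_pow (hα₀ : 0 ≤ α) (hα : α < 1 / 2) :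
    Summable fun i : ℕ ↦ 1 / Real.log ⌈(1 + (i : ℝ) ^ (-α)) ^ i⌉₊ ^ 2 := by
  have hbound : Summable fun i : ℕ ↦ 4 * (1 / (i : ℝ) ^ ((1 - α) * 2)) :=
    (Real.summable_one_div_nat_rpow.2 (by linarith)).mul_left 4
  refine hbound.of_norm_bounded_eventually_nat ?_
  filter_upwards [eventually_ge_atTop 1] with i hi
  have hi' : (0 : ℝ) < i := Nat.cast_pos.2 hi
  rw [Real.norm_of_nonneg (by positivity)]
  calc 1 / Real.log ⌈(1 + (i : ℝ) ^ (-α)) ^ i⌉₊ ^ 2 ≤ 1 / ((i : ℝ) ^ (1 - α) / 2) ^ 2 := by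
        gcongr
        exact half_rpow_le_log_natCeil_one_add_rpow_neg_pow hα₀ hi
    _ = 4 * (1 / (i : ℝ) ^ ((1 - α) * 2)) := by
        rw [Real.rpow_mul hi'.le, Real.rpow_two]
        field_simp
        norm_num

end RpowNeg

/-- For `0 < α < 1/2` and `n_i = ⌈(1 + i^{−α})^i⌉` (for `i ≥ 1`):
(a) `n_i/n_{i+1} → 1`, and (b) `∑_{i ≥ 2} 1/(ln n_i)²` converges. -/
theorem ratio_tendsto_one_and_summable
    (α : ℝ) (hα : 0 < α) (hα' : α < 1 / 2)
    (n : ℕ → ℕ) (hn : ∀ i : ℕ, 1 ≤ i → n i = ⌈(1 + (i : ℝ) ^ (-α)) ^ i⌉₊) :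
    Filter.Tendsto (fun i : ℕ => (n i : ℝ) / (n (i + 1) : ℝ)) Filter.atTop (nhds 1) ∧
      Summable (fun i : ℕ => 1 / (Real.log (n (i + 2))) ^ 2) := by
  constructor
  · refine (tendsto_natCeil_one_add_rpow_neg_pow_div_succ hα (by linarith)).congr' ?_
    filter_upwards [eventually_ge_atTop 1] with i hi
    rw [hn i hi, hn (i + 1) (by omega)]
  · refine ((summable_nat_add_iff 2).2
      (summable_one_div_sq_log_natCeil_one_add_rpow_neg_pow hα.le hα')).congr fun i ↦ ?_
    rw [hn (i + 2) (by omega)]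
end

section
/- Let T : [0,1] → [0,1] be Lipschitz with constant L ≥ 1, and let μ be a T-invariant Borel probability measure on [0,1] which is absolutely continuous with respect to Lebesgue measure λ, with density f (so μ(A) = ∫_A f dλ). Suppose there are a nontrivial interval J ⊆ [0,1], a real δ > 0 and an integer n ≥ 1 such that f ≥ δ λ-almost everywhere on J and [0,1] ⊆ Tⁿ(J). Then μ(I) ≥ (δ/Lⁿ)·λ(I) for every interval I ⊆ [0,1], and consequently f ≥ δ/Lⁿ λ-almost everywhere on [0,1]. -/
open MeasureTheory
open scoped ENNReal NNReal

/-!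
Write `λ` for Lebesgue measure, `K = [0,1]` and `S = Tⁿ`. Pulling a set `A ⊆ K` back to
`B = J ∩ S⁻¹ A` loses nothing, because `S B = A`; as `S` is `Lⁿ`-Lipschitz, `λ A ≤ Lⁿ λ B`. As
inequalities of measures, `λ|_K ≤ Lⁿ S_*(λ|_J)` and `δ λ|_J ≤ μ`; pushing the latter forward by
`S`, which preserves `μ`, gives `δ λ|_K ≤ Lⁿ μ`. Only the scaling of `λ` under Lipschitz maps is
used, so `λ` may be any Hausdorff measure.
-/

theorem lipschitzOnWith_iterate {X : Type*} [PseudoEMetricSpace X] {T : X → X} {K : Set X}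
    {L : ℝ≥0} (hT : LipschitzOnWith L T K) (hmaps : Set.MapsTo T K K) :
    ∀ n : ℕ, LipschitzOnWith (L ^ n) T^[n] K
  | 0 => by simpa using LipschitzWith.id.lipschitzOnWith
  | n + 1 => by
    rw [pow_succ]
    exact (lipschitzOnWith_iterate hT hmaps n).comp hT hmaps

section Measure

variable {X : Type*} [MeasurableSpace X] {μ ν ν' : Measure X} {f g : X → ℝ≥0∞}

theorem withDensity_mono_measure (h : ν ≤ ν') (f : X → ℝ≥0∞) :
    ν.withDensity f ≤ ν'.withDensity f := by
  refine Measure.le_iff.2 fun A hA ↦ ?_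
  rw [withDensity_apply _ hA, withDensity_apply _ hA]
  exact lintegral_mono' (Measure.restrict_mono subset_rfl h) le_rfl

theorem ae_le_of_withDensity_le_withDensity [SigmaFinite ν] (hg : AEMeasurable g ν)
    (h : ν.withDensity g ≤ ν.withDensity f) : g ≤ᵐ[ν] f := by
  refine ae_le_of_forall_setLIntegral_le_of_sigmaFinite₀ hg fun A hA _ ↦ ?_
  rw [← withDensity_apply _ hA, ← withDensity_apply _ hA]
  exact h A

theorem smul_restrict_le_withDensity_restrict {J K : Set X} {δ : ℝ≥0∞} (hJK : J ⊆ K)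
    (hfJ : ∀ᵐ x ∂ν.restrict J, δ ≤ f x) :
    δ • ν.restrict J ≤ (ν.restrict K).withDensity f :=
  calc
    δ • ν.restrict J = (ν.restrict J).withDensity fun _ ↦ δ := (withDensity_const δ).symm
    _ ≤ (ν.restrict J).withDensity f := withDensity_mono hfJ
    _ ≤ (ν.restrict K).withDensity f :=
      withDensity_mono_measure (Measure.restrict_mono_set ν hJK) f

theorem div_smul_le_of_le_smul_map {S : X → X} (hS : MeasurePreserving S μ μ) {δ C : ℝ≥0∞}
    (hν : δ • ν ≤ μ) (hν' : ν' ≤ C • ν.map S) : (δ / C) • ν' ≤ μ := by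
  have hmap : δ • ν.map S ≤ μ := by
    simpa only [Measure.map_smul, hS.map_eq] using Measure.map_mono hν hS.measurable
  refine Measure.le_iff'.2 fun A ↦ ?_
  rw [Measure.smul_apply, smul_eq_mul, ← ENNReal.mul_div_right_comm]
  refine ENNReal.div_le_of_le_mul' ?_
  calc
    δ * ν' A ≤ δ * (C * ν.map S A) := by gcongr; exact hν' A
    _ = C * (δ * ν.map S A) := mul_left_comm _ _ _
    _ ≤ C * μ A := by gcongr; exact hmap A

end Measure

section Hausdorff

variable {X Y : Type*} [EMetricSpace X] [MeasurableSpace X] [BorelSpace X]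
  [EMetricSpace Y] [MeasurableSpace Y] [BorelSpace Y]

theorem hausdorffMeasure_restrict_le_smul_map {S : X → Y} (hS : Measurable S) {C : ℝ≥0}
    {J : Set X} {K : Set Y} (hlip : LipschitzOnWith C S J) (himg : K ⊆ S '' J) {d : ℝ}
    (hd : 0 ≤ d) :
    μH[d].restrict K ≤ (C : ℝ≥0∞) ^ d • (μH[d].restrict J).map S := by
  refine Measure.le_iff.2 fun A hA ↦ ?_
  have hcover : A ∩ K ⊆ S '' (S ⁻¹' A ∩ J) := by
    rw [Set.image_preimage_inter]
    exact Set.inter_subset_inter_right A himg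
  rw [Measure.restrict_apply hA, Measure.smul_apply, smul_eq_mul, Measure.map_apply hS hA,
    Measure.restrict_apply (hS hA)]
  exact (measure_mono hcover).trans
    ((hlip.mono Set.inter_subset_right).hausdorffMeasure_image_le hd)

theorem density_lower_bound_of_expanding_general {T : X → X} {K J : Set X} {L : ℝ≥0} {d : ℝ}
    (hd : 0 ≤ d) [SigmaFinite ((μH[d] : Measure X).restrict K)]
    (hmaps : Set.MapsTo T K K) (hlip : LipschitzOnWith L T K)
    {f : X → ℝ≥0∞} {μ : Measure X} (hμ : μ = (μH[d].restrict K).withDensity f)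
    (hT : MeasurePreserving T μ μ) (hJK : J ⊆ K) {δ : ℝ≥0∞}
    (hfJ : ∀ᵐ x ∂μH[d].restrict J, δ ≤ f x) {n : ℕ} (himg : K ⊆ T^[n] '' J) :
    (∀ A ⊆ K, δ / ((L : ℝ≥0∞) ^ n) ^ d * μH[d] A ≤ μ A) ∧
      ∀ᵐ x ∂μH[d].restrict K, δ / ((L : ℝ≥0∞) ^ n) ^ d ≤ f x := by
  have hTn : MeasurePreserving T^[n] μ μ := hT.iterate n
  have hlipn : LipschitzOnWith (L ^ n) T^[n] J := (lipschitzOnWith_iterate hlip hmaps n).mono hJK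
  have hJμ : δ • μH[d].restrict J ≤ μ := hμ ▸ smul_restrict_le_withDensity_restrict hJK hfJ
  have hKμ : (δ / ((L : ℝ≥0∞) ^ n) ^ d) • μH[d].restrict K ≤ μ := by
    rw [← ENNReal.coe_pow]
    exact div_smul_le_of_le_smul_map hTn hJμ
      (hausdorffMeasure_restrict_le_smul_map hTn.measurable hlipn himg hd)
  refine ⟨fun A hA ↦ ?_, ae_le_of_withDensity_le_withDensity aemeasurable_const ?_⟩
  · simpa only [Measure.smul_apply, smul_eq_mul, Measure.restrict_eq_self _ hA] using hKμ A
  · rwa [withDensity_const, ← hμ]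

end Hausdorff

/-- If `T : [0,1] → [0,1]` is Lipschitz with constant `L ≥ 1`, `μ = f·λ` is a `T`-invariant
Borel probability measure absolutely continuous w.r.t. Lebesgue measure with density `f`,
and there are a nontrivial interval `J ⊆ [0,1]`, `δ > 0` and `n ≥ 1` with `f ≥ δ` a.e. on `J`
and `[0,1] ⊆ Tⁿ(J)`, then `μ(I) ≥ (δ/Lⁿ)·λ(I)` for every interval `I ⊆ [0,1]`, and
`f ≥ δ/Lⁿ` λ-a.e. on `[0,1]`. -/
theorem density_lower_bound_of_expanding
    (T : ℝ → ℝ) (hTmeas : Measurable T)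
    (hmaps : Set.MapsTo T (Set.Icc 0 1) (Set.Icc 0 1))
    (L : ℝ≥0) (hL : 1 ≤ L) (hlip : LipschitzOnWith L T (Set.Icc 0 1))
    (f : ℝ → ℝ≥0∞) (hf : Measurable f)
    (μ : Measure ℝ) [IsProbabilityMeasure μ]
    (hμ : μ = (volume.restrict (Set.Icc 0 1)).withDensity f)
    (hinv : ∀ A : Set ℝ, MeasurableSet A → μ (T ⁻¹' A) = μ A)
    (J : Set ℝ) (a b : ℝ) (hab : a < b) (hJ : J = Set.Icc a b) (hJsub : J ⊆ Set.Icc 0 1)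
    (δ : ℝ) (hδ : 0 < δ) (n : ℕ) (hn : 1 ≤ n)
    (hfJ : ∀ᵐ x ∂volume.restrict J, ENNReal.ofReal δ ≤ f x)
    (himg : Set.Icc (0 : ℝ) 1 ⊆ T^[n] '' J) :
    (∀ c d : ℝ, Set.Icc c d ⊆ Set.Icc 0 1 →
        ENNReal.ofReal (δ / (L : ℝ) ^ n) * volume (Set.Icc c d) ≤ μ (Set.Icc c d)) ∧
      ∀ᵐ x ∂volume.restrict (Set.Icc (0 : ℝ) 1), ENNReal.ofReal (δ / (L : ℝ) ^ n) ≤ f x := by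
  have hT : MeasurePreserving T μ μ :=
    ⟨hTmeas, Measure.ext fun A hA ↦ (Measure.map_apply hTmeas hA).trans (hinv A hA)⟩
  have hconst : ENNReal.ofReal (δ / (L : ℝ) ^ n) =
      ENNReal.ofReal δ / ((L : ℝ≥0∞) ^ n) ^ (1 : ℝ) := by
    have hLpos : (0 : ℝ) < L := zero_lt_one.trans_le hL
    rw [ENNReal.ofReal_div_of_pos (pow_pos hLpos n), ENNReal.ofReal_pow L.coe_nonneg,
      ENNReal.ofReal_coe_nnreal, ENNReal.rpow_one]
  rw [← hausdorffMeasure_real] at hμ hfJ ⊢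
  have : SigmaFinite ((μH[1] : Measure ℝ).restrict (Set.Icc 0 1)) := by
    rw [hausdorffMeasure_real]
    infer_instance
  obtain ⟨hset, hae⟩ :=
    density_lower_bound_of_expanding_general zero_le_one hmaps hlip hμ hT hJsub hfJ himg
  rw [hconst]
  exact ⟨fun c d hcd ↦ hset _ hcd, hae⟩
end

section
/- (Borel's theorem on absolutely normal numbers, the measure-theoretic core of the paper's normal-number construction.) For Lebesgue-almost every x ∈ [0,1], x is absolutely normal: for every integer base b ≥ 2, every integer k ≥ 1 and every word w : {0,…,k−1} → {0,…,b−1}, the frequency (1/N)·#{ i < N : d_b(x, i+j) = w(j) for all j < k } converges to b^{−k} as N → ∞, where d_b(x,i) = ⌊b^{i+1} x⌋ mod b is the i-th digit of the b-ary expansion of x. -/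
open MeasureTheory
open scoped Classical

/-!
Cut the base-`b` expansion of a uniformly distributed `x ∈ [0, 1)` into blocks of `k` digits. The
map `x ↦ b ^ n * x` modulo one preserves Lebesgue measure, so the block starting at position `n`
is uniformly distributed on `b ^ k` values, and two blocks that do not overlap are independent.
Positions in a fixed residue class modulo `k + 1` thus carry pairwise independent, identically
distributed blocks, so Etemadi's strong law applies to each class, and averaging over the classes
gives the frequency of every word. Since there are countably many words and digits have period one
in `x`, almost every real number is normal to all bases at once.
-/

open Filter ProbabilityTheory
open scoped Topology

section Residues

lemma sum_range_eq_sum_residues {M : Type*} [AddCommMonoid M] (a : ℕ → M) {k : ℕ} (hk : 0 < k)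
    (n : ℕ) :
    ∑ i ∈ Finset.range n, a i =
      ∑ r ∈ Finset.range k, ∑ i ∈ Finset.range ((n + (k - 1 - r)) / k), a (k * i + r) := by
  have mem_iff {r i : ℕ} (hr : r < k) : i < (n + (k - 1 - r)) / k ↔ k * i + r < n := by
    rw [Nat.lt_iff_add_one_le, Nat.le_div_iff_mul_le hk, add_one_mul, mul_comm]
    lia
  rw [Finset.sum_sigma']
  refine Finset.sum_bij' (fun i _ ↦ ⟨i % k, i / k⟩) (fun p _ ↦ k * p.2 + p.1) ?_ ?_ ?_ ?_ ?_
  · intro i hi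
    have hik := Nat.mod_lt i hk
    simpa [hik, mem_iff hik, Nat.div_add_mod] using hi
  · rintro ⟨r, i⟩ hp
    simp only [Finset.mem_sigma, Finset.mem_range] at hp ⊢
    exact (mem_iff hp.1).1 hp.2
  · exact fun i _ ↦ Nat.div_add_mod i k
  · rintro ⟨r, i⟩ hp
    have hr : r < k := by simpa using (Finset.mem_sigma.1 hp).1
    simp [Nat.mod_eq_of_lt hr, Nat.mul_add_div hk, Nat.div_eq_of_lt hr]
  · exact fun i _ ↦ by rw [Nat.div_add_mod]

lemma tendsto_natCast_add_div_div (d k : ℕ) :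
    Tendsto (fun n : ℕ ↦ (((n + d) / k : ℕ) : ℝ) / n) atTop (𝓝 (k : ℝ)⁻¹) := by
  have hfloor : Tendsto (fun n : ℕ ↦ (((n + d) / k : ℕ) : ℝ) / (n + d : ℕ)) atTop
      (𝓝 (k : ℝ)⁻¹) := by
    refine ((tendsto_nat_floor_mul_div_atTop (R := ℝ) (a := (k : ℝ)⁻¹) (by positivity)).comp
      (tendsto_natCast_atTop_atTop.comp (tendsto_add_atTop_nat d))).congr fun n ↦ ?_
    simp only [Function.comp_apply, inv_mul_eq_div, Nat.floor_div_eq_div]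
  have hshift : Tendsto (fun n : ℕ ↦ ((n + d : ℕ) : ℝ) / n) atTop (𝓝 1) := by
    simpa using (tendsto_natCast_div_add_atTop (d : ℝ)).inv₀ one_ne_zero
  rw [← mul_one (k : ℝ)⁻¹]
  refine (hfloor.mul hshift).congr' ?_
  filter_upwards [eventually_gt_atTop 0] with n hn
  exact div_mul_div_cancel₀ (by positivity)

lemma tendsto_average_of_residues {E : Type*} [AddCommMonoid E] [Module ℝ E] [TopologicalSpace E]
    [ContinuousAdd E] [ContinuousSMul ℝ E] {a : ℕ → E} {c : E} {k : ℕ} (hk : 0 < k)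
    (h : ∀ r < k, Tendsto (fun n : ℕ ↦ (n : ℝ)⁻¹ • ∑ i ∈ Finset.range n, a (k * i + r)) atTop
      (𝓝 c)) :
    Tendsto (fun n : ℕ ↦ (n : ℝ)⁻¹ • ∑ i ∈ Finset.range n, a i) atTop (𝓝 c) := by
  have hcount (d : ℕ) : Tendsto (fun n ↦ (n + d) / k) atTop atTop :=
    (Nat.tendsto_div_const_atTop hk.ne').comp (tendsto_add_atTop_nat d)
  have hclass : ∀ r ∈ Finset.range k, Tendsto
      (fun n : ℕ ↦ (n : ℝ)⁻¹ • ∑ i ∈ Finset.range ((n + (k - 1 - r)) / k), a (k * i + r)) atTop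
      (𝓝 ((k : ℝ)⁻¹ • c)) := by
    intro r hr
    refine ((tendsto_natCast_add_div_div (k - 1 - r) k).smul
      ((h r (Finset.mem_range.1 hr)).comp (hcount (k - 1 - r)))).congr' ?_
    filter_upwards [(hcount (k - 1 - r)).eventually_gt_atTop 0] with n hn
    rw [Function.comp_apply, smul_smul, div_mul_eq_mul_div, mul_inv_cancel₀ (by positivity),
      one_div]
  have hsum := tendsto_finsetSum (Finset.range k) hclass
  simp_rw [← Finset.smul_sum, ← sum_range_eq_sum_residues a hk, Finset.sum_const,
    Finset.card_range] at hsum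
  rwa [← Nat.cast_smul_eq_nsmul ℝ, inv_smul_smul₀ (by positivity)] at hsum

end Residues

section Probability

variable {Ω : Type*} {mΩ : MeasurableSpace Ω} {μ : Measure Ω}

lemma indepFun_comp_measurePreserving {Ω' α β : Type*} {mΩ' : MeasurableSpace Ω'}
    [MeasurableSpace α] [MeasurableSpace β] {ν : Measure Ω'} {f : Ω' → α} {g : Ω' → β} {T : Ω → Ω'}
    (h : IndepFun f g ν) (hf : Measurable f) (hg : Measurable g) (hT : MeasurePreserving T μ ν) :
    IndepFun (f ∘ T) (g ∘ T) μ := by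
  rw [indepFun_iff_measure_inter_preimage_eq_mul]
  intro s t hs ht
  simp only [Set.preimage_comp, ← Set.preimage_inter]
  rw [hT.measure_preimage ((hf hs).inter (hg ht)).nullMeasurableSet,
    hT.measure_preimage (hf hs).nullMeasurableSet, hT.measure_preimage (hg ht).nullMeasurableSet,
    h.measure_inter_preimage_eq_mul _ _ hs ht]

theorem strong_law_ae_of_mDependent {E : Type*} [NormedAddCommGroup E] [NormedSpace ℝ E]
    [CompleteSpace E] [MeasurableSpace E] [BorelSpace E] {X : ℕ → Ω → E} {m : ℕ}
    (hint : Integrable (X 0) μ) (hindep : ∀ i j, i + m < j → IndepFun (X i) (X j) μ)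
    (hident : ∀ i, IdentDistrib (X i) (X 0) μ μ) :
    ∀ᵐ ω ∂μ, Tendsto (fun n : ℕ ↦ (n : ℝ)⁻¹ • ∑ i ∈ Finset.range n, X i ω) atTop
      (𝓝 (∫ ω, X 0 ω ∂μ)) := by
  have hclass (r : ℕ) : ∀ᵐ ω ∂μ, Tendsto
      (fun n : ℕ ↦ (n : ℝ)⁻¹ • ∑ i ∈ Finset.range n, X ((m + 1) * i + r) ω) atTop
      (𝓝 (∫ ω, X 0 ω ∂μ)) := by
    have hgap {i j : ℕ} (hij : i < j) :
        IndepFun (X ((m + 1) * i + r)) (X ((m + 1) * j + r)) μ :=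
      hindep _ _ (by nlinarith)
    have hlaw := strong_law_ae (fun i ↦ X ((m + 1) * i + r))
      ((hident _).symm.integrable_snd hint)
      (fun i j hij ↦ hij.lt_or_gt.elim hgap fun hji ↦ (hgap hji).symm)
      (fun i ↦ (hident _).trans (hident _).symm)
    rwa [(hident _).integral_eq] at hlaw
  filter_upwards [ae_all_iff.2 hclass] with ω hω
  exact tendsto_average_of_residues m.succ_pos fun r _ ↦ hω r

theorem ae_tendsto_frequency_of_mDependent [IsFiniteMeasure μ] {α : Type*} [MeasurableSpace α]
    {Y : ℕ → Ω → α} {m : ℕ} (hindep : ∀ i j, i + m < j → IndepFun (Y i) (Y j) μ)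
    (hident : ∀ i, IdentDistrib (Y i) (Y 0) μ μ) {s : Set α} [DecidablePred (· ∈ s)]
    (hs : MeasurableSet s) :
    ∀ᵐ ω ∂μ, Tendsto
      (fun N : ℕ ↦ (((Finset.range N).filter (fun i ↦ Y i ω ∈ s)).card : ℝ) / N) atTop
      (𝓝 (μ.real (Y 0 ⁻¹' s))) := by
  have hind : Measurable (s.indicator (1 : α → ℝ)) := measurable_one.indicator hs
  have hY : AEMeasurable (Y 0) μ := (hident 0).aemeasurable_fst
  have hlaw := strong_law_ae_of_mDependent (X := fun i ↦ s.indicator (1 : α → ℝ) ∘ Y i)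
    (((integrable_const 1).indicator hs).comp_aemeasurable hY)
    (fun i j hij ↦ (hindep i j hij).comp hind hind) (fun i ↦ (hident i).comp hind)
  have hmean : ∫ ω, (s.indicator (1 : α → ℝ) ∘ Y 0) ω ∂μ = μ.real (Y 0 ⁻¹' s) := by
    rw [← map_measureReal_apply_of_aemeasurable hY hs, ← integral_indicator_one hs,
      integral_map hY hind.aestronglyMeasurable]
    rfl
  rw [hmean] at hlaw
  filter_upwards [hlaw] with ω hω
  refine hω.congr fun N ↦ ?_
  simp [Set.indicator_apply, Finset.sum_boole, inv_mul_eq_div]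

end Probability

section UnitInterval

/-- Multiplication by `q` modulo one, with values in `[0, 1)`. -/
noncomputable def mulModOne (q : ℕ) (x : ℝ) : ℝ := Int.fract (q * x)

/-- The uniform probability measure on `[0, 1)`. -/
noncomputable def uniformUnit : Measure ℝ := volume.restrict (Set.Ico 0 1)

instance : IsProbabilityMeasure uniformUnit := ⟨by simp [uniformUnit]⟩

@[fun_prop]
lemma measurable_mulModOne (q : ℕ) : Measurable (mulModOne q) := by
  unfold mulModOne
  fun_prop

lemma measurable_floor_natCast_mul (q : ℕ) : Measurable fun x : ℝ ↦ ⌊q * x⌋ := by fun_prop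

lemma mulModOne_mulModOne (q r : ℕ) (x : ℝ) :
    mulModOne q (mulModOne r x) = mulModOne (q * r) x := by
  refine Int.fract_eq_fract.2 ⟨-(q * ⌊r * x⌋), ?_⟩
  rw [mulModOne, Int.fract]
  push_cast
  ring

lemma floor_natCast_mul_fract {q : ℕ} (hq : 0 < q) (y : ℝ) :
    ⌊q * Int.fract y⌋ = ⌊q * y⌋ % q := by
  have hsplit : ⌊q * y⌋ = ⌊q * Int.fract y⌋ + q * ⌊y⌋ := by
    rw [← Int.floor_add_intCast, Int.fract]
    push_cast
    ring_nf
  have hlt : ⌊q * Int.fract y⌋ < q := by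
    rw [Int.floor_lt, Int.cast_natCast]
    exact mul_lt_of_lt_one_right (by positivity) (Int.fract_lt_one y)
  rw [hsplit, Int.add_mul_emod_self_left, Int.emod_eq_of_lt (by positivity) hlt]

lemma volume_floor_eq_inter_fract_preimage {q : ℝ} (hq : q ≠ 0) (p : ℤ) (F : Set ℝ) :
    volume ({x | ⌊q * x⌋ = p} ∩ (fun x ↦ Int.fract (q * x)) ⁻¹' F) =
      ENNReal.ofReal |q⁻¹| * volume (F ∩ Set.Ico 0 1) := by
  have hset : {x | ⌊q * x⌋ = p} ∩ (fun x ↦ Int.fract (q * x)) ⁻¹' F =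
      (q * ·) ⁻¹' ((· + -(p : ℝ)) ⁻¹' (F ∩ Set.Ico 0 1)) := by
    ext x
    have hmem : q * x + -p ∈ Set.Ico 0 1 ↔ ⌊q * x⌋ = p := by
      rw [Int.floor_eq_iff, Set.mem_Ico]
      constructor <;> rintro ⟨h₁, h₂⟩ <;> constructor <;> linarith
    simp only [Set.mem_inter_iff, Set.mem_ofPred_eq, Set.mem_preimage, hmem, and_comm (b := _ = p)]
    refine and_congr_right fun hp ↦ ?_
    rw [Int.fract, hp, sub_eq_add_neg]
  rw [hset, Real.volume_preimage_mul_left hq, measure_preimage_add_right]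

lemma floor_natCast_mul_mem_Ico_iff {q : ℕ} (hq : 0 < q) (x : ℝ) :
    ⌊q * x⌋ ∈ Finset.Ico (0 : ℤ) q ↔ x ∈ Set.Ico 0 1 := by
  have hq' : (0 : ℝ) < q := by exact_mod_cast hq
  rw [Finset.mem_Ico, Set.mem_Ico, Int.floor_nonneg, Int.floor_lt, Int.cast_natCast,
    mul_nonneg_iff_of_pos_left hq', mul_lt_iff_lt_one_right hq']

lemma uniformUnit_floor_preimage_inter_mulModOne_preimage {q : ℕ} (hq : 0 < q) (s : Set ℤ)
    [DecidablePred (· ∈ s)] {F : Set ℝ} (hF : MeasurableSet F) :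
    uniformUnit ((fun x : ℝ ↦ ⌊q * x⌋) ⁻¹' s ∩ mulModOne q ⁻¹' F) =
      ((Finset.Ico (0 : ℤ) q).filter (· ∈ s)).card * ((q : ENNReal)⁻¹ * uniformUnit F) := by
  have hunion : ((fun x : ℝ ↦ ⌊q * x⌋) ⁻¹' s ∩ mulModOne q ⁻¹' F) ∩ Set.Ico 0 1 =
      ⋃ p ∈ (Finset.Ico (0 : ℤ) q).filter (· ∈ s),
        {x : ℝ | ⌊q * x⌋ = p} ∩ mulModOne q ⁻¹' F := by
    ext x
    simp only [Set.mem_inter_iff, Set.mem_preimage, ← floor_natCast_mul_mem_Ico_iff hq x,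
      Set.mem_iUnion, Finset.mem_filter, Set.mem_ofPred_eq, exists_prop, ↓existsAndEq]
    tauto
  have hcell (p : ℤ) : volume ({x : ℝ | ⌊q * x⌋ = p} ∩ mulModOne q ⁻¹' F) =
      (q : ENNReal)⁻¹ * uniformUnit F := by
    have hq' : (0 : ℝ) < q := by exact_mod_cast hq
    rw [uniformUnit, Measure.restrict_apply hF, ← ENNReal.ofReal_natCast q,
      ← ENNReal.ofReal_inv_of_pos hq', ← abs_of_pos (inv_pos.2 hq')]
    exact volume_floor_eq_inter_fract_preimage hq'.ne' p F
  rw [uniformUnit, Measure.restrict_apply' measurableSet_Ico, hunion, measure_biUnion_finset]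
  · simp_rw [hcell, Finset.sum_const, nsmul_eq_mul, uniformUnit]
  · exact fun p _ p' _ hpp' ↦ Set.disjoint_left.2 fun x hx hx' ↦ hpp' (hx.1.symm.trans hx'.1)
  · exact fun p _ ↦ (measurable_floor_natCast_mul q (measurableSet_singleton p)).inter
      (measurable_mulModOne q hF)

lemma measurePreserving_mulModOne {q : ℕ} (hq : 0 < q) :
    MeasurePreserving (mulModOne q) uniformUnit uniformUnit := by
  refine ⟨measurable_mulModOne q, Measure.ext fun F hF ↦ ?_⟩
  have h := uniformUnit_floor_preimage_inter_mulModOne_preimage hq Set.univ hF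
  simp only [Set.preimage_univ, Set.univ_inter, Set.mem_univ, Finset.filter_true, Int.card_Ico,
    sub_zero, Int.toNat_natCast] at h
  rw [Measure.map_apply (measurable_mulModOne q) hF, h, ← mul_assoc,
    ENNReal.mul_inv_cancel (by exact_mod_cast hq.ne') (ENNReal.natCast_ne_top q), one_mul]

lemma uniformUnit_floor_preimage {q : ℕ} (hq : 0 < q) (s : Set ℤ) [DecidablePred (· ∈ s)] :
    uniformUnit ((fun x : ℝ ↦ ⌊q * x⌋) ⁻¹' s) =
      ((Finset.Ico (0 : ℤ) q).filter (· ∈ s)).card * (q : ENNReal)⁻¹ := by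
  simpa using uniformUnit_floor_preimage_inter_mulModOne_preimage hq s MeasurableSet.univ

lemma indepFun_floor_mulModOne {q : ℕ} (hq : 0 < q) :
    IndepFun (fun x : ℝ ↦ ⌊q * x⌋) (mulModOne q) uniformUnit := by
  rw [indepFun_iff_measure_inter_preimage_eq_mul]
  intro s F _ hF
  rw [uniformUnit_floor_preimage_inter_mulModOne_preimage hq s hF, uniformUnit_floor_preimage hq s,
    (measurePreserving_mulModOne hq).measure_preimage hF.nullMeasurableSet, mul_assoc]

end UnitInterval

section DigitBlock

/-- The integer whose base-`b` digits are those of `x` at positions `n, …, n + k - 1`, position `0`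
being the first one after the point. -/
noncomputable def digitBlock (b k n : ℕ) (x : ℝ) : ℤ := ⌊(b : ℝ) ^ (n + k) * x⌋ % (b : ℤ) ^ k

/-- The integer whose base-`b` digits are `w 0, …, w (k - 1)`, most significant digit first. -/
def wordValue (b : ℕ) (w : ℕ → ℕ) : ℕ → ℕ
  | 0 => 0
  | k + 1 => b * wordValue b w k + w k

lemma wordValue_lt {b k : ℕ} {w : ℕ → ℕ} (hw : ∀ j < k, w j < b) : wordValue b w k < b ^ k := by
  induction k with
  | zero => simp [wordValue]
  | succ k ih =>
    calc b * wordValue b w k + w k < b * wordValue b w k + b := by gcongr; exact hw k k.lt_succ_self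
      _ = b * (wordValue b w k + 1) := by ring
      _ ≤ b * b ^ k := by gcongr; exact ih fun j hj ↦ hw j (by lia)
      _ = b ^ (k + 1) := (pow_succ' b k).symm

lemma emod_mul_eq_mul_add_iff {b B z p d : ℤ} (hd : 0 ≤ d) (hdb : d < b) :
    z % (b * B) = b * p + d ↔ z / b % B = p ∧ z % b = d := by
  have hb : 0 < b := hd.trans_lt hdb
  have hdiv : z % (b * B) / b = z / b % B := by
    have hsplit : z % (b * B) = z % b + b * (z / b % B) := by
      simp only [Int.emod_def, ← Int.ediv_ediv_of_nonneg hb.le]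
      ring
    rw [hsplit, Int.add_mul_ediv_left _ _ hb.ne',
      Int.ediv_eq_zero_of_lt (Int.emod_nonneg z hb.ne') (Int.emod_lt_of_pos z hb), zero_add]
  have hmod : z % (b * B) % b = z % b := Int.emod_emod_of_dvd z (dvd_mul_right b B)
  rw [← hdiv, ← hmod, Int.ediv_emod_unique hb]
  lia

lemma digitBlock_succ_eq_iff {b : ℕ} (hb : 0 < b) (k n p d : ℕ) (x : ℝ) (hd : d < b) :
    digitBlock b (k + 1) n x = (b * p + d : ℕ) ↔
      digitBlock b k n x = p ∧ ⌊(b : ℝ) ^ (n + k + 1) * x⌋ % b = d := by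
  have hfloor : ⌊(b : ℝ) ^ (n + k) * x⌋ = ⌊(b : ℝ) ^ (n + k + 1) * x⌋ / b := by
    rw [← Int.floor_div_natCast, pow_succ', mul_assoc, mul_div_cancel_left₀ _ (by positivity)]
  rw [digitBlock, digitBlock, hfloor, ← add_assoc, pow_succ' (b : ℤ), Nat.cast_add, Nat.cast_mul]
  exact emod_mul_eq_mul_add_iff (by positivity) (by exact_mod_cast hd)

lemma digitBlock_eq_wordValue_iff {b k : ℕ} {w : ℕ → ℕ} (hw : ∀ j < k, w j < b) (n : ℕ) (x : ℝ) :
    digitBlock b k n x = wordValue b w k ↔ ∀ j < k, ⌊(b : ℝ) ^ (n + j + 1) * x⌋ % b = w j := by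
  induction k with
  | zero => simp [digitBlock, wordValue]
  | succ k ih =>
    have hwk : w k < b := hw k k.lt_succ_self
    rw [wordValue, digitBlock_succ_eq_iff (by lia) k n _ _ x hwk, ih fun j hj ↦ hw j (by lia),
      Nat.forall_lt_succ_right]

lemma digitBlock_eq_floor_comp_mulModOne {b : ℕ} (hb : 0 < b) (k n : ℕ) :
    digitBlock b k n = (fun y : ℝ ↦ ⌊(b ^ k : ℕ) * y⌋) ∘ mulModOne (b ^ n) := by
  ext x
  rw [Function.comp_apply, mulModOne, floor_natCast_mul_fract (by positivity), digitBlock]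
  push_cast
  ring_nf

lemma digitBlock_periodic (b k n : ℕ) : Function.Periodic (digitBlock b k n) 1 := by
  intro x
  have hshift : (b : ℝ) ^ (n + k) * (x + 1) =
      (b : ℝ) ^ (n + k) * x + ((b : ℤ) ^ k * (b : ℤ) ^ n : ℤ) := by
    push_cast
    ring
  rw [digitBlock, hshift, Int.floor_add_intCast, Int.add_mul_emod_self_left, digitBlock]

lemma indepFun_digitBlock {b : ℕ} (hb : 0 < b) {k m n : ℕ} (hmn : m + k ≤ n) :
    IndepFun (digitBlock b k m) (digitBlock b k n) uniformUnit := by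
  obtain ⟨d, rfl⟩ := Nat.exists_eq_add_of_le hmn
  have hn : digitBlock b k (m + k + d) =
      ((fun y : ℝ ↦ ⌊(b ^ k : ℕ) * mulModOne (b ^ d) y⌋) ∘ mulModOne (b ^ k)) ∘
        mulModOne (b ^ m) := by
    ext x
    rw [digitBlock_eq_floor_comp_mulModOne hb]
    simp only [Function.comp_apply]
    rw [mulModOne_mulModOne, mulModOne_mulModOne, ← pow_add, ← pow_add]
    ring_nf
  have hind : IndepFun (fun y : ℝ ↦ ⌊(b ^ k : ℕ) * y⌋)
      ((fun y : ℝ ↦ ⌊(b ^ k : ℕ) * mulModOne (b ^ d) y⌋) ∘ mulModOne (b ^ k)) uniformUnit :=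
    (indepFun_floor_mulModOne (by positivity)).comp measurable_id (by fun_prop)
  rw [hn, digitBlock_eq_floor_comp_mulModOne hb]
  exact indepFun_comp_measurePreserving hind (measurable_floor_natCast_mul _) (by fun_prop)
    (measurePreserving_mulModOne (by positivity))

lemma measurable_digitBlock (b k n : ℕ) : Measurable (digitBlock b k n) := by
  unfold digitBlock
  fun_prop

lemma identDistrib_digitBlock {b : ℕ} (hb : 0 < b) (k n : ℕ) :
    IdentDistrib (digitBlock b k n) (digitBlock b k 0) uniformUnit uniformUnit := by
  have hmap (n : ℕ) : uniformUnit.map (digitBlock b k n) =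
      uniformUnit.map fun y : ℝ ↦ ⌊(b ^ k : ℕ) * y⌋ := by
    rw [digitBlock_eq_floor_comp_mulModOne hb,
      ← Measure.map_map (measurable_floor_natCast_mul _) (measurable_mulModOne _),
      (measurePreserving_mulModOne (by positivity)).map_eq]
  exact ⟨(measurable_digitBlock b k n).aemeasurable, (measurable_digitBlock b k 0).aemeasurable,
    (hmap n).trans (hmap 0).symm⟩

lemma uniformUnit_real_digitBlock_preimage_singleton {b k p : ℕ} (hb : 0 < b) (hp : p < b ^ k)
    (n : ℕ) : uniformUnit.real (digitBlock b k n ⁻¹' {(p : ℤ)}) = ((b : ℝ) ^ k)⁻¹ := by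
  have hfilter : (Finset.Ico (0 : ℤ) (b ^ k : ℕ)).filter (· ∈ ({(p : ℤ)} : Set ℤ)) = {(p : ℤ)} := by
    ext z
    simp only [Finset.mem_filter, Finset.mem_Ico, Set.mem_singleton_iff, Finset.mem_singleton]
    lia
  rw [digitBlock_eq_floor_comp_mulModOne hb, Set.preimage_comp,
    (measurePreserving_mulModOne (by positivity)).measureReal_preimage
      (measurable_floor_natCast_mul _ (measurableSet_singleton _)).nullMeasurableSet,
    measureReal_def, uniformUnit_floor_preimage (by positivity), hfilter]
  simp

lemma ae_tendsto_frequency_digitBlock {b : ℕ} (hb : 0 < b) {k p : ℕ} (hp : p < b ^ k) :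
    ∀ᵐ x ∂uniformUnit, Tendsto
      (fun N : ℕ ↦ (((Finset.range N).filter (fun i ↦ digitBlock b k i x = p)).card : ℝ) / N) atTop
      (𝓝 ((b : ℝ) ^ k)⁻¹) := by
  have hfreq := ae_tendsto_frequency_of_mDependent (Y := digitBlock b k)
    (fun i j (hij : i + k < j) ↦ indepFun_digitBlock hb hij.le) (identDistrib_digitBlock hb k)
    (measurableSet_singleton (p : ℤ))
  simpa only [uniformUnit_real_digitBlock_preimage_singleton hb hp, Set.mem_singleton_iff]
    using hfreq

end DigitBlock

lemma ae_of_periodic_of_ae_restrict_Ico {P : ℝ → Prop} {T : ℝ} (hT : 0 < T)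
    (hP : Function.Periodic P T) {a : ℝ}
    (h : ∀ᵐ x ∂volume.restrict (Set.Ico a (a + T)), P x) : ∀ᵐ x, P x := by
  rw [restrict_Ico_eq_restrict_Ioc, ae_iff, Measure.restrict_apply' measurableSet_Ioc] at h
  refine (isAddFundamentalDomain_Ioc hT a).measure_zero_of_invariant _ (fun g ↦ ?_) h
  obtain ⟨_, n, rfl⟩ := g
  ext x
  rw [Set.mem_vadd_set_iff_neg_vadd_mem]
  change ¬P (-(n • T) + x) ↔ ¬P x
  rw [← neg_smul, add_comm, hP.zsmul]

theorem ae_absolutely_normal_general :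
    ∀ᵐ x : ℝ, ∀ b : ℕ, 0 < b → ∀ (k : ℕ) (w : ℕ → ℕ), (∀ j < k, w j < b) →
      Tendsto
        (fun N : ℕ ↦
          (((Finset.range N).filter
              (fun i ↦ ∀ j < k, ⌊(b : ℝ) ^ (i + j + 1) * x⌋ % (b : ℤ) = (w j : ℤ))).card : ℝ) / N)
        atTop (𝓝 ((b : ℝ) ^ k)⁻¹) := by
  have hblock (b k p : ℕ) (hb : 0 < b) (hp : p < b ^ k) : ∀ᵐ x : ℝ, Tendsto
      (fun N : ℕ ↦ (((Finset.range N).filter (fun i ↦ digitBlock b k i x = p)).card : ℝ) / N) atTop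
      (𝓝 ((b : ℝ) ^ k)⁻¹) := by
    refine ae_of_periodic_of_ae_restrict_Ico one_pos (fun x ↦ ?_) (a := 0) ?_
    · simp only [digitBlock_periodic b k _ x]
    · rw [zero_add]
      exact ae_tendsto_frequency_digitBlock hb hp
  simp only [← ae_all_iff] at hblock
  filter_upwards [hblock] with x hx b hb k w hw
  simpa only [digitBlock_eq_wordValue_iff hw] using hx b k _ hb (wordValue_lt hw)

/-- Borel's theorem: Lebesgue-almost every `x ∈ [0,1]` is absolutely normal, i.e. for every
base `b ≥ 2`, every length `k ≥ 1` and every word `w` on the alphabet `{0,…,b−1}`, the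
frequency of occurrences of `w` among the first `N` digit positions of the `b`-ary expansion
of `x` converges to `b^{−k}`. Here the `i`-th digit is `⌊b^{i+1}x⌋ mod b`. -/
theorem ae_absolutely_normal :
    ∀ᵐ x ∂volume.restrict (Set.Icc (0 : ℝ) 1),
      ∀ b : ℕ, 2 ≤ b → ∀ k : ℕ, 1 ≤ k → ∀ w : ℕ → ℕ, (∀ j < k, w j < b) →
        Filter.Tendsto
          (fun N : ℕ =>
            (((Finset.range N).filter
                (fun i => ∀ j < k, (⌊(b : ℝ) ^ (i + j + 1) * x⌋ % (b : ℤ)) = (w j : ℤ))).card : ℝ)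
              / N)
          Filter.atTop (nhds (((b : ℝ) ^ k)⁻¹)) :=
  (ae_restrict_of_ae ae_absolutely_normal_general).mono
    fun _ hx b hb k _ w hw ↦ hx b (by lia) k w hw
end
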